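/- arXiv:2406.10850 — 2 statements merged into one kernel-verified Lean document; each statement's English description precedes it below -/
import Mathlib

section
/- Let b be a prime and t ≥ 0 an integer, let D_1, D_2 be generating matrices of a digital (0,2)-sequence over F_b, and let E_1, E_2 be defined by E_1(i,r) = 0 for r ≤ t, E_1(i,r) = D_1(i, r − t) for r > t, and E_2(i,r) = D_2(i,r) for i ≤ t, r ≤ t, E_2(i,r) = 0 for i ≤ t, r > t, E_2(i,r) = 0 for i > t, r ≤ t, E_2(i,r) = D_2(i − t, r − t) for i > t, r > t. Let m ≥ t, let w_1 = 0 and let w_2 be an integer with 0 ≤ w_2 ≤ t and m − w_2 − t ≥ 0. Let Ẽ_1^{(m)} = E_1^{(m)} and let Ẽ_2^{(m)} be the column reduction of E_2^{(m)} with reduction index w_2. Then ρ_m(Ẽ_1^{(m)}, Ẽ_2^{(m)}) = m − t. -/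
open Finset

/-- The family consisting of the first `d j` rows of each of the matrices `C j`
(a row index `≥ m` yields the zero vector). -/
def rowFamily {b s m : ℕ} (C : Fin s → Matrix (Fin m) (Fin m) (ZMod b))
    (d : Fin s → ℕ) : (Σ j : Fin s, Fin (d j)) → (Fin m → ZMod b) :=
  fun p r => if h : (p.2 : ℕ) < m then C p.1 ⟨(p.2 : ℕ), h⟩ r else 0

/-- The first `d j` rows of the matrices `C j` are linearly independent over `𝔽_b`. -/
def RowsLI {b s m : ℕ} (C : Fin s → Matrix (Fin m) (Fin m) (ZMod b))
    (d : Fin s → ℕ) : Prop :=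
  LinearIndependent (ZMod b) (rowFamily C d)

/-- The linear independence parameter `ρ_m(C_1, …, C_s)`: the largest `ρ` such that for
every choice of nonnegative integers `d_1 + ⋯ + d_s = ρ`, the corresponding first rows
of the matrices are linearly independent. -/
noncomputable def rho {b s m : ℕ} (C : Fin s → Matrix (Fin m) (Fin m) (ZMod b)) : ℕ :=
  sSup {ρ : ℕ | ∀ d : Fin s → ℕ, ∑ j, d j = ρ → RowsLI C d}

/-- Left upper `k × k` submatrix of an infinite matrix. -/
def upperLeft {b : ℕ} (C : Matrix ℕ ℕ (ZMod b)) (k : ℕ) :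
    Matrix (Fin k) (Fin k) (ZMod b) :=
  Matrix.of fun i r => C (i : ℕ) (r : ℕ)

/-- Column reduction with reduction index `w`: the first `m - min m w` columns are kept,
the last `min m w` columns are set to zero. -/
def colReduce {b m : ℕ} (C : Matrix (Fin m) (Fin m) (ZMod b)) (w : ℕ) :
    Matrix (Fin m) (Fin m) (ZMod b) :=
  Matrix.of fun i r => if (r : ℕ) < m - min m w then C i r else 0

/-- `C` is a family of generating matrices of a digital `(t,s)`-sequence over `𝔽_b`. -/
def IsDigitalSeq {b s : ℕ} (C : Fin s → Matrix ℕ ℕ (ZMod b)) (t : ℕ) : Prop :=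
  ∀ k : ℕ, max t 1 ≤ k → k - t ≤ rho (fun j => upperLeft (C j) k)

/-!
Write `C₁, C₂` for `E₁` and the column reduction of `E₂`, and let `D` be the underlying digital
`(0,2)`-sequence. In `C₁` the first `t` columns vanish and in `C₂` the last `w₂` do, which bounds
`ρ_m` by `m - t` and by `m - w₂`. Conversely, take `d₁ + d₂ = m - max t w₂` rows and look at
leading square blocks. On the first `min d₂ t` columns only the first `min d₂ t` rows of `C₂`
survive, and there they form the corresponding block of `D₂`. The other rows, restricted to the
`d₁ + max (d₂ - t) 0` columns following the first `t`, are the first `d₁` and `max (d₂ - t) 0`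
rows of the blocks of `D₁` and `D₂` of that size. Both families are independent, and the block
triangular shape makes their union independent. Unless `d₂ ≤ t`, the second window has to avoid
the deleted columns, which is what `d₁ + d₂ ≤ m - w₂` provides.
-/

section LinearIndependence

variable {R ι κ M N : Type*} [Ring R] [AddCommGroup M] [Module R M] [AddCommGroup N] [Module R N]

theorem linearIndepOn_union_of_map {v : ι → M} {s t : Set ι} (f : M →ₗ[R] N)
    (hs : LinearIndepOn R (f ∘ v) s) (ht : LinearIndepOn R v t) (hft : ∀ i ∈ t, f (v i) = 0) :
    LinearIndepOn R v (s ∪ t) := by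
  have hker : Submodule.span R (v '' t) ≤ LinearMap.ker f :=
    Submodule.span_le.2 (Set.image_subset_iff.2 hft)
  have hdisj : Disjoint (Submodule.span R (v '' s)) (LinearMap.ker f) := by
    rw [Set.image_eq_range]
    exact Submodule.range_ker_disjoint hs
  exact (LinearIndepOn.of_comp f hs).union ht (hdisj.mono_right hker)

theorem card_le_card_of_linearIndependent_of_support [StrongRankCondition R] [Fintype ι]
    {v : ι → κ → R} (hv : LinearIndependent R v) (S : Finset κ) (hS : ∀ i, ∀ k ∉ S, v i k = 0) :
    Fintype.card ι ≤ #S := by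
  let extend : (S → R) →ₗ[R] κ → R := Function.ExtendByZero.linearMap R Subtype.val
  have hfactor : v = extend ∘ fun i k => v i k := by
    ext i k
    by_cases hk : k ∈ S
    · exact (Subtype.val_injective.extend_apply (fun k : S => v i k) 0 ⟨k, hk⟩).symm
    · rw [hS i k hk]
      have hrange : ¬ ∃ l : S, (l : κ) = k := fun ⟨l, hl⟩ => hk (hl ▸ l.2)
      exact (Function.extend_apply' (fun k : S => v i k) (0 : κ → R) k hrange).symm
  rw [hfactor] at hv
  simpa using (LinearIndependent.of_comp extend hv).fintype_card_le_finrank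

end LinearIndependence

section Rows

variable {b s m : ℕ} {C : Fin s → Matrix (Fin m) (Fin m) (ZMod b)} {d : Fin s → ℕ}

/-- Row `p.2` of the matrix `C p.1`, or zero if there is no such row. Indexing all rows by
`Fin s × ℕ` turns the families `rowFamily C d` for varying `d` into restrictions of a single
family. -/
def paddedRow (C : Fin s → Matrix (Fin m) (Fin m) (ZMod b)) (p : Fin s × ℕ) : Fin m → ZMod b :=
  fun r => if h : p.2 < m then C p.1 ⟨p.2, h⟩ r else 0

/-- The indices, in the sense of `paddedRow`, of the first `d j` rows of the `j`-th matrix, for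
all `j`. -/
def firstRows (d : Fin s → ℕ) : Set (Fin s × ℕ) :=
  {p | p.2 < d p.1}

theorem paddedRow_of_lt {p : Fin s × ℕ} (hp : p.2 < m) (r : Fin m) :
    paddedRow C p r = C p.1 ⟨p.2, hp⟩ r :=
  dif_pos hp

theorem rowsLI_iff_linearIndepOn :
    RowsLI C d ↔ LinearIndepOn (ZMod b) (paddedRow C) (firstRows d) := by
  let index : (Σ j, Fin (d j)) → Fin s × ℕ := fun p => (p.1, p.2)
  have hinj : Function.Injective index := by
    rintro ⟨j, i⟩ ⟨j', i'⟩ h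
    obtain ⟨rfl : j = j', hi : (i : ℕ) = i'⟩ := Prod.mk.inj h
    rw [Fin.ext hi]
  have hrange : Set.range index = firstRows d :=
    Set.ext fun p => ⟨fun ⟨q, hq⟩ => hq ▸ q.2.2, fun hp => ⟨⟨p.1, p.2, hp⟩, rfl⟩⟩
  rw [← hrange, linearIndepOn_range_iff hinj]
  rfl

theorem RowsLI.mono {d' : Fin s → ℕ} (h : RowsLI C d') (hd : d ≤ d') : RowsLI C d :=
  rowsLI_iff_linearIndepOn.2 <|
    (rowsLI_iff_linearIndepOn.1 h).mono fun p hp => lt_of_lt_of_le hp (hd p.1)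

theorem RowsLI.le_card_of_support [Nontrivial (ZMod b)] (h : RowsLI C d) {j : Fin s}
    (S : Finset (Fin m)) (hS : ∀ i, ∀ r ∉ S, C j i r = 0) : d j ≤ #S := by
  have hj : LinearIndependent (ZMod b) (rowFamily C d ∘ Sigma.mk j) :=
    h.comp _ sigma_mk_injective
  have hvanish : ∀ i, ∀ r ∉ S, (rowFamily C d ∘ Sigma.mk j) i r = 0 := by
    intro i r hr
    simp only [Function.comp_apply, rowFamily, hS _ r hr, dite_eq_ite, ite_self]
  simpa using card_le_card_of_linearIndependent_of_support hj S hvanish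

theorem rowsLI_of_sum_le_rho (h : ∑ j, d j ≤ rho C) : RowsLI C d := by
  by_cases hd : ∀ j, d j = 0
  · have : IsEmpty (Σ j, Fin (d j)) := ⟨fun p => (Fin.cast (hd p.1) p.2).elim0⟩
    exact linearIndependent_empty_type
  obtain ⟨j, hj⟩ := not_forall.1 hd
  set S := {ρ : ℕ | ∀ d : Fin s → ℕ, ∑ j, d j = ρ → RowsLI C d}
  have hpos : 0 < sSup S :=
    (Nat.pos_of_ne_zero hj).trans_le ((single_le_sum_of_canonicallyOrdered (mem_univ j)).trans h)
  have hne : S.Nonempty := by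
    by_contra hS
    simp [Set.not_nonempty_iff_eq_empty.1 hS] at hpos
  have hbdd : BddAbove S := by
    by_contra hS
    exact hpos.ne' (Nat.sSup_of_not_bddAbove hS)
  have henlarged : RowsLI C (d + Pi.single j (rho C - ∑ i, d i)) := by
    refine Nat.sSup_mem hne hbdd _ ?_
    simpa only [Pi.add_apply, sum_add_distrib, sum_pi_single', mem_univ, if_true] using!
      Nat.add_sub_of_le h
  exact henlarged.mono le_self_add

theorem nontrivial_of_rho_pos (h : 0 < rho C) : Nontrivial (ZMod b) := by
  by_contra htriv
  have : Subsingleton (ZMod b) := not_nontrivial_iff_subsingleton.1 htriv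
  have hall : {ρ : ℕ | ∀ d : Fin s → ℕ, ∑ j, d j = ρ → RowsLI C d} = Set.univ :=
    Set.eq_univ_of_forall fun _ _ _ => linearIndependent_of_subsingleton
  rw [rho, hall, Nat.sSup_of_not_bddAbove not_bddAbove_univ] at h
  exact h.false

end Rows

section DigitalSequence

variable {b s t : ℕ} {C : Fin s → Matrix ℕ ℕ (ZMod b)}

theorem IsDigitalSeq.nontrivial (hC : IsDigitalSeq C t) : Nontrivial (ZMod b) := by
  have h := hC (t + 1) (by omega)
  rw [Nat.add_sub_cancel_left] at h
  exact nontrivial_of_rho_pos h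

theorem IsDigitalSeq.linearIndepOn_firstRows (hC : IsDigitalSeq C t) {d : Fin s → ℕ} {k : ℕ}
    (hd : ∑ j, d j ≤ k - t) :
    LinearIndepOn (ZMod b) (paddedRow fun j => upperLeft (C j) k) (firstRows d) := by
  refine rowsLI_iff_linearIndepOn.1 (rowsLI_of_sum_le_rho ?_)
  rcases le_or_gt (max t 1) k with hk | hk
  · exact hd.trans (hC k hk)
  · omega

end DigitalSequence

section StrictPair

/-- The matrices `E₁, E₂` built from `D₁, D₂`: the columns of `D₁` are shifted by `t`, and
`E₂` is block diagonal with blocks `D₂^{(t)}` and `D₂`. -/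
def strictPair {b : ℕ} (t : ℕ) (D : Fin 2 → Matrix ℕ ℕ (ZMod b)) :
    Fin 2 → Matrix ℕ ℕ (ZMod b) :=
  ![Matrix.of fun i r => if r < t then 0 else D 0 i (r - t),
    Matrix.of fun i r =>
      if i < t then (if r < t then D 1 i r else 0)
      else (if r < t then 0 else D 1 (i - t) (r - t))]

/-- The matrices whose parameter `ρ_m` is computed: `E₁^{(m)}` and the column reduction of
`E₂^{(m)}` with reduction index `w`. -/
def reducedPair {b : ℕ} (E : Fin 2 → Matrix ℕ ℕ (ZMod b)) (m w : ℕ) :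
    Fin 2 → Matrix (Fin m) (Fin m) (ZMod b) :=
  ![upperLeft (E 0) m, colReduce (upperLeft (E 1) m) w]

/-- The index of the row of `strictPair t D` which contains the `p`-th row of `D` shifted by `t`
columns. -/
def shiftedRow (t : ℕ) (p : Fin 2 × ℕ) : Fin 2 × ℕ :=
  (p.1, ![p.2, t + p.2] p.1)

variable {b t m w : ℕ} {D E : Fin 2 → Matrix ℕ ℕ (ZMod b)}

theorem reducedPair_zero_apply (i r : Fin m) : reducedPair E m w 0 i r = E 0 i r :=
  rfl

theorem reducedPair_one_of_lt (i : Fin m) {r : Fin m} (hr : (r : ℕ) < m - w) :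
    reducedPair E m w 1 i r = E 1 i r :=
  if_pos (by rwa [tsub_min])

theorem reducedPair_one_of_le (i : Fin m) {r : Fin m} (hr : m - w ≤ r) :
    reducedPair E m w 1 i r = 0 :=
  if_neg (by rwa [tsub_min, not_lt])

theorem strictPair_zero_of_lt {i r : ℕ} (hr : r < t) : strictPair t D 0 i r = 0 :=
  if_pos hr

theorem strictPair_zero_add (i r : ℕ) : strictPair t D 0 i (t + r) = D 0 i r := by
  simp [strictPair]

theorem strictPair_one_of_lt {i r : ℕ} (hi : i < t) (hr : r < t) :
    strictPair t D 1 i r = D 1 i r := by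
  simp [strictPair, hi, hr]

theorem strictPair_one_add_of_lt {i r : ℕ} (hr : r < t) : strictPair t D 1 (t + i) r = 0 := by
  simp [strictPair, hr]

theorem strictPair_one_add_add (i r : ℕ) : strictPair t D 1 (t + i) (t + r) = D 1 i r := by
  simp [strictPair]

theorem linearIndepOn_leadingRows (hD : IsDigitalSeq D 0) {k : ℕ} (hkt : k ≤ t)
    (hkw : k ≤ m - w) :
    LinearIndepOn (ZMod b)
      (LinearMap.funLeft (ZMod b) (ZMod b) (Fin.castLE (hkw.trans (Nat.sub_le m w))) ∘
        paddedRow (reducedPair (strictPair t D) m w))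
      (firstRows ![0, k]) := by
  refine (hD.linearIndepOn_firstRows (k := k) (by simp)).congr ?_
  rintro ⟨j, i⟩ hi
  ext r
  fin_cases j
  · exact absurd hi (Nat.not_lt_zero i)
  · have hik : i < k := hi
    have hr : (Fin.castLE (hkw.trans (Nat.sub_le m w)) r : ℕ) < m - w := r.2.trans_le hkw
    calc
      paddedRow (fun j => upperLeft (D j) k) (1, i) r
        = D 1 i r := paddedRow_of_lt hik r
      _ = strictPair t D 1 i r := (strictPair_one_of_lt (by omega) (by omega)).symm
      _ = paddedRow (reducedPair (strictPair t D) m w) (1, i) (Fin.castLE _ r) := by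
        rw [paddedRow_of_lt (by simp only; omega), reducedPair_one_of_lt _ hr]
        rfl

theorem linearIndepOn_shiftedRow (hD : IsDigitalSeq D 0) {d : Fin 2 → ℕ}
    (hdm : t + ∑ j, d j ≤ m) (hdw : d 1 = 0 ∨ t + ∑ j, d j ≤ m - w) :
    LinearIndepOn (ZMod b) (paddedRow (reducedPair (strictPair t D) m w))
      (shiftedRow t '' firstRows d) := by
  let window (r : Fin (∑ j, d j)) : Fin m := ⟨t + r, by omega⟩
  refine LinearIndepOn.image_of_comp _ _ (.of_comp (LinearMap.funLeft _ (ZMod b) window) ?_)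
  refine (hD.linearIndepOn_firstRows (k := ∑ j, d j) le_rfl).congr ?_
  rintro ⟨j, i⟩ (hi : i < d j)
  have hij : i < ∑ j, d j := hi.trans_le (single_le_sum_of_canonicallyOrdered (mem_univ j))
  ext r
  fin_cases j
  · calc
      paddedRow (fun j => upperLeft (D j) (∑ j, d j)) (0, i) r
        = D 0 i r := paddedRow_of_lt hij r
      _ = strictPair t D 0 i (t + r) := (strictPair_zero_add i r).symm
      _ = paddedRow (reducedPair (strictPair t D) m w) (0, i) (window r) := by
        rw [paddedRow_of_lt (by simp only; omega), reducedPair_zero_apply]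
  · have hr : (window r : ℕ) < m - w := by
      have hd1 : d 1 ≠ 0 := (Nat.zero_lt_of_lt hi).ne'
      exact (Nat.add_lt_add_left r.2 t).trans_le (hdw.resolve_left hd1)
    calc
      paddedRow (fun j => upperLeft (D j) (∑ j, d j)) (1, i) r
        = D 1 i r := paddedRow_of_lt hij r
      _ = strictPair t D 1 (t + i) (t + r) := (strictPair_one_add_add i r).symm
      _ = paddedRow (reducedPair (strictPair t D) m w) (1, t + i) (window r) := by
        rw [paddedRow_of_lt (by simp only; omega), reducedPair_one_of_lt _ hr]

theorem firstRows_subset_union (t : ℕ) (d : Fin 2 → ℕ) :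
    firstRows d ⊆ firstRows ![0, min (d 1) t] ∪ shiftedRow t '' firstRows ![d 0, d 1 - t] := by
  rintro ⟨j, i⟩ hi
  fin_cases j
  · exact .inr ⟨(0, i), hi, rfl⟩
  · have hid : i < d 1 := hi
    rcases lt_or_ge i t with hit | hit
    · exact .inl (lt_min hid hit)
    · exact .inr ⟨(1, i - t), Nat.sub_lt_sub_right hit hid,
        Prod.ext rfl (Nat.add_sub_of_le hit)⟩

theorem paddedRow_shiftedRow_of_lt (p : Fin 2 × ℕ) {r : Fin m} (hr : (r : ℕ) < t) :
    paddedRow (reducedPair (strictPair t D) m w) (shiftedRow t p) r = 0 := by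
  by_cases hp : (shiftedRow t p).2 < m
  · rw [paddedRow_of_lt hp]
    obtain ⟨j, i⟩ := p
    fin_cases j
    · exact (reducedPair_zero_apply _ r).trans (strictPair_zero_of_lt hr)
    · rcases lt_or_ge (r : ℕ) (m - w) with hrw | hrw
      · exact (reducedPair_one_of_lt _ hrw).trans (strictPair_one_add_of_lt hr)
      · exact reducedPair_one_of_le _ hrw
  · exact dif_neg hp

theorem rowsLI_reducedPair (hD : IsDigitalSeq D 0) {d : Fin 2 → ℕ}
    (hd : ∑ j, d j ≤ m - max t w) : RowsLI (reducedPair (strictPair t D) m w) d := by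
  rw [Fin.sum_univ_two] at hd
  rcases Nat.eq_zero_or_pos (d 0 + d 1) with h0 | hpos
  · exact rowsLI_of_sum_le_rho (by simp only [Fin.sum_univ_two, h0, Nat.zero_le])
  have hleading := linearIndepOn_leadingRows (m := m) (w := w) hD (min_le_right (d 1) t) (by omega)
  have hshifted : LinearIndepOn (ZMod b) (paddedRow (reducedPair (strictPair t D) m w))
      (shiftedRow t '' firstRows ![d 0, d 1 - t]) := by
    apply linearIndepOn_shiftedRow hD <;>
      simp only [Fin.sum_univ_two, Matrix.cons_val_zero, Matrix.cons_val_one] <;> omega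
  rw [rowsLI_iff_linearIndepOn]
  refine (linearIndepOn_union_of_map _ hleading hshifted ?_).mono (firstRows_subset_union t d)
  rintro _ ⟨p, -, rfl⟩
  ext r
  exact paddedRow_shiftedRow_of_lt p (r.2.trans_le (min_le_right (d 1) t))

theorem le_of_rowsLI_reducedPair [Nontrivial (ZMod b)] {ρ : ℕ}
    (h : ∀ d : Fin 2 → ℕ, ∑ j, d j = ρ → RowsLI (reducedPair (strictPair t D) m w) d) :
    ρ ≤ m - max t w := by
  have hfirst : ρ ≤ m - t := by
    have hcard := (h ![ρ, 0] (by simp)).le_card_of_support (j := 0) {r | ¬ (r : ℕ) < t}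
      fun i r hr => (reducedPair_zero_apply i r).trans (strictPair_zero_of_lt (by simpa using hr))
    rwa [← compl_filter, card_compl, Fin.card_filter_val_lt, Fintype.card_fin, tsub_min] at hcard
  have hsecond : ρ ≤ m - w := by
    have hcard := (h ![0, ρ] (by simp)).le_card_of_support (j := 1) {r | (r : ℕ) < m - w}
      fun i r hr => reducedPair_one_of_le i (by simpa using hr)
    rw [Fin.card_filter_val_lt] at hcard
    exact hcard.trans (min_le_right _ _)
  omega

end StrictPair

theorem strict_seq_reduced_rho_case_t_general {b t m w₂ : ℕ}
    (D E : Fin 2 → Matrix ℕ ℕ (ZMod b)) (hD : IsDigitalSeq D 0)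
    (hE1 : ∀ i r : ℕ, E 0 i r = if r < t then 0 else D 0 i (r - t))
    (hE2 : ∀ i r : ℕ, E 1 i r =
      if i < t then (if r < t then D 1 i r else 0)
      else (if r < t then 0 else D 1 (i - t) (r - t))) :
    rho ![upperLeft (E 0) m, colReduce (upperLeft (E 1) m) w₂] = m - max t w₂ := by
  have hE : E = strictPair t D := by
    ext j i r
    fin_cases j
    · exact hE1 i r
    · exact hE2 i r
  subst hE
  have := hD.nontrivial
  exact IsGreatest.csSup_eq
    ⟨fun _ hd => rowsLI_reducedPair hD hd.le, fun _ => le_of_rowsLI_reducedPair⟩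

/-- Remark 3, Case 2 (`max {t, w_2} = t`): for the strict `(t,2)`-sequence `E_1, E_2`
and reduction indices `w_1 = 0` and `0 ≤ w_2 ≤ t` with `m - w_2 - t ≥ 0`, one has
`ρ_m(Ẽ_1^{(m)}, Ẽ_2^{(m)}) = m - t`. -/
theorem strict_seq_reduced_rho_case_t {b t m w₂ : ℕ} (hb : b.Prime)
    (D E : Fin 2 → Matrix ℕ ℕ (ZMod b))
    (hD : ∀ k : ℕ, 1 ≤ k → rho (fun j => upperLeft (D j) k) = k)
    (hE1 : ∀ i r : ℕ, E 0 i r = if r < t then 0 else D 0 i (r - t))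
    (hE2 : ∀ i r : ℕ, E 1 i r =
      if i < t then (if r < t then D 1 i r else 0)
      else (if r < t then 0 else D 1 (i - t) (r - t)))
    (hm : t ≤ m) (hw : w₂ + t ≤ m) (hwt : w₂ ≤ t) :
    rho ![upperLeft (E 0) m, colReduce (upperLeft (E 1) m) w₂] = m - t := by
  rw [← max_eq_left hwt]
  exact strict_seq_reduced_rho_case_t_general D E
    (fun k hk => (hD k (le_of_max_le_right hk)).ge) hE1 hE2
end

section
/- Let b be a prime, s ≥ 1 an integer, ∅ ≠ u ⊆ {1,…,s} a nonempty subset with ū := max(u), and t_u ≥ 0 an integer. Let C_1,…,C_s be infinite matrices over F_b such that the subfamily (C_j)_{j∈u} satisfies the digital sequence condition with parameter t_u: for every integer k ≥ max{t_u,1} and all nonnegative integers (d_j)_{j∈u} with Σ_{j∈u} d_j = k − t_u, the families of the first d_j rows of C_j^{(k)}, j ∈ u, are jointly linearly independent over F_b. Let m ≥ t_u, let 0 = w_1 ≤ w_2 ≤ ⋯ ≤ w_s be reduction indices, and let C̃_j^{(m)} be the corresponding column reduced matrices. Then ρ_m((C̃_j^{(m)})_{j∈u}) ≥ max{0, m −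 w_ū − t_u}; that is, if m − w_ū − t_u ≥ 0, then for all nonnegative integers (d_j)_{j∈u} with Σ_{j∈u} d_j = m − w_ū − t_u, the first d_j rows of C̃_j^{(m)}, j ∈ u, are jointly linearly independent over F_b. -/
open Finset

/-- The linear independence parameter `ρ_m((C_j)_{j ∈ u})` of the subfamily of matrices
indexed by `u`: tuples `(d_j)_{j ∈ u}` are encoded as functions `d : Fin s → ℕ`
vanishing outside `u`. -/
noncomputable def rhoOn {b s m : ℕ} (u : Finset (Fin s))
    (C : Fin s → Matrix (Fin m) (Fin m) (ZMod b)) : ℕ :=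
  sSup {ρ : ℕ | ∀ d : Fin s → ℕ, (∀ j ∉ u, d j = 0) → ∑ j, d j = ρ → RowsLI C d}

/-!
Fix `k = m - v`, where `v` bounds all the reduction indices `w_j`, `j ∈ u`. Column reduction leaves
the first `k` columns of every matrix indexed by `u` untouched, so the left upper `k × k` block of
`C̃_j^{(m)}` is still `C_j^{(k)}`. Truncating vectors to their first `k` coordinates is linear, so
any independence of rows of the `C_j^{(k)}` lifts to the corresponding rows of the `C̃_j^{(m)}`.
-/

section Rows

variable {b s m k : ℕ} {A : Fin s → Matrix (Fin m) (Fin m) (ZMod b)} {d : Fin s → ℕ}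

theorem rowFamily_apply_of_le (hd : ∀ j, d j ≤ m) (p : Σ j, Fin (d j)) :
    rowFamily A d p = A p.1 (p.2.castLE (hd p.1)) := by
  funext r
  exact dif_pos (p.2.isLt.trans_le (hd p.1))

theorem rowsLI_of_sum_eq_zero (hd : ∑ j, d j = 0) : RowsLI A d := by
  have hd_zero : ∀ j, d j = 0 := by simpa using hd
  have : IsEmpty (Σ j, Fin (d j)) := ⟨fun p => (hd_zero p.1 ▸ p.2).elim0⟩
  exact linearIndependent_empty_type

theorem RowsLI.sum_le [Nontrivial (ZMod b)] (h : RowsLI A d) : ∑ j, d j ≤ m := by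
  simpa [Fintype.card_sigma] using LinearIndependent.fintype_card_le_finrank h

theorem RowsLI.apply_le [Nontrivial (ZMod b)] (h : RowsLI A d) (j : Fin s) : d j ≤ m :=
  (single_le_sum_of_canonicallyOrdered (mem_univ j)).trans h.sum_le

theorem RowsLI.of_submatrix_castLE {B : Fin s → Matrix (Fin k) (Fin k) (ZMod b)} (hkm : k ≤ m)
    (hAB : ∀ j, d j ≠ 0 → (A j).submatrix (Fin.castLE hkm) (Fin.castLE hkm) = B j)
    (h : RowsLI B d) : RowsLI A d := by
  rcases subsingleton_or_nontrivial (ZMod b) with _ | _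
  · exact linearIndependent_of_subsingleton
  have hdk : ∀ j, d j ≤ k := h.apply_le
  have hdm : ∀ j, d j ≤ m := fun j => (hdk j).trans hkm
  have truncate_row : LinearMap.funLeft (ZMod b) (ZMod b) (Fin.castLE hkm) ∘ rowFamily A d =
      rowFamily B d := by
    funext p r
    rw [Function.comp_apply, LinearMap.funLeft_apply, rowFamily_apply_of_le hdm,
      rowFamily_apply_of_le hdk, ← hAB p.1 (Fin.pos p.2).ne']
    rfl
  rw [RowsLI, ← truncate_row] at h
  exact h.of_comp _

end Rows

theorem colReduce_upperLeft_submatrix {b v w : ℕ} (C : Matrix ℕ ℕ (ZMod b)) (m : ℕ)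
    (hwv : w ≤ v) :
    (colReduce (upperLeft C m) w).submatrix
      (Fin.castLE (Nat.sub_le m v)) (Fin.castLE (Nat.sub_le m v)) = upperLeft C (m - v) := by
  ext i r
  have hr : (r : ℕ) < m - min m w := by omega
  exact if_pos hr

/-- The family `(A_j)_{j ∈ u}` has strength `ρ` if every selection of `ρ` first rows in total is
linearly independent, so that `rhoOn u A` is the supremum of the strengths. As in `rhoOn`, a
selection is a function on all of `Fin s` vanishing outside `u`. -/
def HasStrengthOn {b s m : ℕ} (u : Finset (Fin s)) (A : Fin s → Matrix (Fin m) (Fin m) (ZMod b))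
    (ρ : ℕ) : Prop :=
  ∀ d : Fin s → ℕ, (∀ j ∉ u, d j = 0) → ∑ j, d j = ρ → RowsLI A d

section Strength

variable {b s m ρ : ℕ} {u : Finset (Fin s)} {A : Fin s → Matrix (Fin m) (Fin m) (ZMod b)}

theorem hasStrengthOn_zero : HasStrengthOn u A 0 :=
  fun _ _ hd => rowsLI_of_sum_eq_zero hd

theorem HasStrengthOn.le_size [Nontrivial (ZMod b)] (hu : u.Nonempty) (h : HasStrengthOn u A ρ) :
    ρ ≤ m := by
  obtain ⟨j₀, hj₀⟩ := hu
  let d : Fin s → ℕ := Pi.single j₀ ρ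
  have hsum : ∑ j, d j = ρ := by simp [d]
  have hsupp : ∀ j ∉ u, d j = 0 := fun j hj =>
    Pi.single_eq_of_ne (M := fun _ => ℕ) (ne_of_mem_of_not_mem hj₀ hj).symm ρ
  exact hsum.symm.trans_le (h d hsupp hsum).sum_le

theorem HasStrengthOn.le_rhoOn [Nontrivial (ZMod b)] (hu : u.Nonempty)
    (h : HasStrengthOn u A ρ) : ρ ≤ rhoOn u A :=
  le_csSup ⟨m, fun _ hσ => HasStrengthOn.le_size hu hσ⟩ h

theorem HasStrengthOn.colReduce {v : ℕ} {C : Fin s → Matrix ℕ ℕ (ZMod b)} {w : Fin s → ℕ}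
    (hw : ∀ j ∈ u, w j ≤ v) (h : HasStrengthOn u (fun j => upperLeft (C j) (m - v)) ρ) :
    HasStrengthOn u (fun j => colReduce (upperLeft (C j) m) (w j)) ρ := by
  intro d hd hsum
  refine (h d hd hsum).of_submatrix_castLE (Nat.sub_le m v) fun j hj => ?_
  have hju : j ∈ u := not_imp_comm.mp (hd j) hj
  exact colReduce_upperLeft_submatrix (C j) m (hw j hju)

end Strength

theorem col_reduced_rho_lower_bound_proj_general {b s t m v : ℕ} (hb : b ≠ 1)
    {u : Finset (Fin s)} (hu : u.Nonempty) {C : Fin s → Matrix ℕ ℕ (ZMod b)} {w : Fin s → ℕ}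
    (hw : ∀ j ∈ u, w j ≤ v)
    (hC : max t 1 ≤ m - v → HasStrengthOn u (fun j => upperLeft (C j) (m - v)) (m - v - t)) :
    max 0 ((m : ℤ) - v - t) ≤ (rhoOn u (fun j => colReduce (upperLeft (C j) m) (w j)) : ℤ) ∧
    (v + t ≤ m →
      HasStrengthOn u (fun j => colReduce (upperLeft (C j) m) (w j)) (m - v - t)) := by
  have : Nontrivial (ZMod b) := ZMod.nontrivial_iff.mpr hb
  have hstrength :
      HasStrengthOn u (fun j => colReduce (upperLeft (C j) m) (w j)) (m - v - t) := by
    rcases Nat.eq_zero_or_pos (m - v - t) with hzero | hpos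
    · exact hzero ▸ hasStrengthOn_zero
    · exact (hC (by omega)).colReduce hw
  have hrho := hstrength.le_rhoOn hu
  exact ⟨by omega, fun _ => hstrength⟩

/-- Corollary (lower bound for projections): if the subfamily `(C_j)_{j ∈ u}` satisfies
the digital sequence condition with parameter `t_u`, then for the column reduced
matrices `ρ_m((C̃_j^{(m)})_{j ∈ u}) ≥ max {0, m - w_ū - t_u}`; that is, if
`m - w_ū - t_u ≥ 0`, then all choices of first rows with `∑_{j ∈ u} d_j = m - w_ū - t_u`
are jointly linearly independent. -/
theorem col_reduced_rho_lower_bound_proj {b s tu m : ℕ} (hb : b.Prime) (hs : 1 ≤ s)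
    (u : Finset (Fin s)) (hu : u.Nonempty)
    (C : Fin s → Matrix ℕ ℕ (ZMod b))
    (hC : ∀ k : ℕ, max tu 1 ≤ k → ∀ d : Fin s → ℕ, (∀ j ∉ u, d j = 0) →
      ∑ j, d j = k - tu → RowsLI (fun j => upperLeft (C j) k) d)
    (hm : tu ≤ m)
    (w : Fin s → ℕ) (hw0 : w ⟨0, by omega⟩ = 0) (hwmono : Monotone w) :
    max 0 ((m : ℤ) - (w (u.max' hu) : ℕ) - (tu : ℕ)) ≤
      (rhoOn u (fun j => colReduce (upperLeft (C j) m) (w j)) : ℤ) ∧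
    (w (u.max' hu) + tu ≤ m →
      ∀ d : Fin s → ℕ, (∀ j ∉ u, d j = 0) → ∑ j, d j = m - w (u.max' hu) - tu →
        RowsLI (fun j => colReduce (upperLeft (C j) m) (w j)) d) :=
  col_reduced_rho_lower_bound_proj_general hb.ne_one hu (fun j hj => hwmono (u.le_max' j hj)) (hC _)
end
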